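/- There exists a constant C > 0 such that for all r, t > 0 one has |∂h_t(r)/∂t| ≤ C (|r²/(4t²) − Q²/4| + 1/t) h_t(r). -/

import Mathlib

/-!
The idea is to expand `h_t` into finitely many nonnegative terms, each of which can be
differentiated in `t` by hand.

The operators `-(1/sinh (r/2)) d/dr` and `-(1/sinh r) d/dr` are negative derivatives in the
variables `2 cosh (r/2)` and `cosh r`. Applied to `e^{-r²/(4t)}` they produce
`e^{-r²/(4t)} ∑ t^{-j} a_j(r)`, where the `a_j` are built by sums and products from the iterated
derivatives `fS n = (-(1/sinh r) d/dr)^n (r/sinh r)`, from `fS n (r/2)` and from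
`1/cosh (r/2)` (`iterate_D1_D2_gauss`). All of these are nonnegative. For `fS n` this follows from
two descriptions of its numerator `numF n`: the three-term recursion, which expresses
`fS (n+1) = -(1/sinh) (fS n)'`, and the identity `numF (n+1)' = (n+1)² sinh · numF n`, which gives
positivity because `numF n` vanishes at `0`.

For `ν` even, `h_t(r)` is thus a positive combination of terms
`t^{-1/2-j} e^{-Q²t/4} e^{-r²/(4t)}`, whose logarithmic derivative in `t` is
`r²/(4t²) - Q²/4 - (1/2+j)/t`. Since the terms are nonnegative, the bound follows.

For `ν` odd, the term `r²/(4t²)` is replaced by `s²/(4t²)` under the integral over `s > r`, and the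
difference `(s² - r²)/(4t²)` has to be `O(1/t)` on average (`integral_sq_sub_le`). Writing
`(s/(2t)) e^{-s²/(4t)} = -d/ds e^{-s²/(4t)}` and integrating by parts, this reduces to
`s (W a_j)' ≤ C W a_j` for the weight `W = sinh s / √(cosh s - cosh r)`, hence to
`s a_j' ≤ (C - s) a_j`. This rate of decay (`Dec 1 a_j`) is gained as soon as
`-(1/sinh r) d/dr` has been applied once (`Cls.exists_deriv`), and it comes down to the growth
estimate `numF_growth`, proved by induction with the three-term recursion.
-/

open Real MeasureTheory Filter Topology

noncomputable section

namespace DR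

/-- The operator `𝓡 g (r) = (1 / sinh r) g'(r)`. -/
def Rop (g : ℝ → ℝ) : ℝ → ℝ := fun r => (1 / Real.sinh r) * deriv g r

/-- The operator `-(1 / sinh r) d/dr`. -/
def D1 (g : ℝ → ℝ) : ℝ → ℝ := fun r => -(1 / Real.sinh r) * deriv g r

/-- The operator `-(1 / sinh (r/2)) d/dr`. -/
def D2 (g : ℝ → ℝ) : ℝ → ℝ := fun r => -(1 / Real.sinh (r / 2)) * deriv g r

/-- The Gaussian `e^{-r²/(4t)}`. -/
def gauss (t : ℝ) : ℝ → ℝ := fun r => Real.exp (-r ^ 2 / (4 * t))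

/-- `Q = (μ + 2ν)/2`. -/
def Qc (μ ν : ℕ) : ℝ := ((μ : ℝ) + 2 * ν) / 2

/-- `c_k = 2^{-μ-ν/2-1-k} π^{-n/2}` with `n = μ+ν+1`. -/
def cc (μ ν k : ℕ) : ℝ :=
  (2 : ℝ) ^ (-(μ : ℝ) - (ν : ℝ) / 2 - 1 - (k : ℝ)) *
    Real.pi ^ (-(((μ : ℝ) + ν + 1)) / 2)

/-- The Damek–Ricci heat kernel `h_t`. -/
def heat (μ ν : ℕ) (t : ℝ) : ℝ → ℝ := fun r =>
  if Even ν then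
    cc μ ν 0 * t ^ (-(1 : ℝ) / 2) * Real.exp (-(Qc μ ν) ^ 2 * t / 4) *
      (D1^[ν / 2] (D2^[μ / 2] (gauss t))) r
  else
    cc μ ν 0 * Real.pi ^ (-(1 : ℝ) / 2) * t ^ (-(1 : ℝ) / 2) *
      Real.exp (-(Qc μ ν) ^ 2 * t / 4) *
      ∫ s in Set.Ioi r, (Real.sinh s / Real.sqrt (Real.cosh s - Real.cosh r)) *
        (D1^[(ν + 1) / 2] (D2^[μ / 2] (gauss t))) s

/-- `Ψ_k(r,t)`. -/
def Psi (k : ℕ) (r t : ℝ) : ℝ :=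
  if 1 < r ∨ Even k then (1 + 1 / Real.sqrt t + r / t) ^ k
  else r * (1 + 1 / Real.sqrt t + r / t) ^ (k - 1) * (1 + 1 / t)

/-- `Ψ̃_k(r,t)`. -/
def PsiT (k : ℕ) (r t : ℝ) : ℝ :=
  if 1 < r ∨ Even k then (1 + 1 / Real.sqrt t + r / t) ^ k
  else (1 + 1 / Real.sqrt t + r / t) ^ (k - 1) * (1 + r / t)

/-- `p_{a,b}(r) = sinh^a r cosh^b r`. -/
def pab (a b : ℕ) (r : ℝ) : ℝ := Real.sinh r ^ a * Real.cosh r ^ b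

/-- `Θ_{p,q}(r)` (with real exponents, via `rpow`). -/
def Theta (p q : ℝ) (r : ℝ) : ℝ :=
  ((r / (1 + r)) * (Real.exp (r / 2) / (2 * Real.sinh (r / 2)))) ^ p *
    ((r / (1 + 2 * r)) * (Real.exp r / Real.sinh r)) ^ q

/-- Points of `S = ℝ^μ × ℝ^ν × (0,∞)` (the last coordinate ranges over `ℝ`;
statements are always restricted to `0 < a`). -/
abbrev Pt (μ ν : ℕ) := (Fin μ → ℝ) × (Fin ν → ℝ) × ℝ

/-- The quantity `((√a + 1/√a)/2 + |x|²/(8√a))² + |z|²/(4a)`, equal to `cosh²(r/2)`. -/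
def coshExpr (μ ν : ℕ) (p : Pt μ ν) : ℝ :=
  ((Real.sqrt p.2.2 + (Real.sqrt p.2.2)⁻¹) / 2 +
      (Real.sqrt p.2.2)⁻¹ * (∑ i, p.1 i ^ 2) / 8) ^ 2 +
    (p.2.2)⁻¹ * (∑ i, p.2.1 i ^ 2) / 4

/-- The vector field `X_0 = a ∂_a`. -/
def X0op (μ ν : ℕ) (f : Pt μ ν → ℝ) : Pt μ ν → ℝ :=
  fun p => p.2.2 * deriv (fun s => f (p.1, p.2.1, s)) p.2.2

/-- The vector fields `X_j`, `j ∈ {0, …, n-1}`, `n = μ+ν+1`: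
`X_0 = a ∂_a`, `X_ℓ = √a (∂_{x_ℓ} + (1/2) Σ_k (J_k x, e_ℓ) ∂_{z_k})` for `ℓ = 1,…,μ`,
and `X_{μ+k} = a ∂_{z_k}` for `k = 1,…,ν`. -/
def Xf (μ ν : ℕ) (Jm : Fin ν → Matrix (Fin μ) (Fin μ) ℝ) (j : Fin (μ + ν + 1))
    (f : Pt μ ν → ℝ) : Pt μ ν → ℝ := fun p =>
  if h0 : (j : ℕ) = 0 then p.2.2 * deriv (fun s => f (p.1, p.2.1, s)) p.2.2
  else if hm : (j : ℕ) ≤ μ then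
    Real.sqrt p.2.2 *
      (deriv (fun s => f (Function.update p.1 ⟨(j : ℕ) - 1, by omega⟩ s, p.2.1, p.2.2))
          (p.1 ⟨(j : ℕ) - 1, by omega⟩) +
        (1 / 2) * ∑ k : Fin ν, (Jm k).mulVec p.1 ⟨(j : ℕ) - 1, by omega⟩ *
          deriv (fun s => f (p.1, Function.update p.2.1 k s, p.2.2)) (p.2.1 k))
  else
    p.2.2 *
      deriv (fun s =>
          f (p.1, Function.update p.2.1 ⟨(j : ℕ) - μ - 1, by have := j.isLt; omega⟩ s, p.2.2))
        (p.2.1 ⟨(j : ℕ) - μ - 1, by have := j.isLt; omega⟩)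

/-- `X_J = X_{J_1} X_{J_2} ⋯ X_{J_k}` for a multi-index `J`. -/
def XL (μ ν : ℕ) (Jm : Fin ν → Matrix (Fin μ) (Fin μ) ℝ) :
    List (Fin (μ + ν + 1)) → (Pt μ ν → ℝ) → Pt μ ν → ℝ
  | [], f => f
  | j :: L, f => Xf μ ν Jm j (XL μ ν Jm L f)

/-! ### The functions `s / sinh s` and their successive derivatives in `cosh s` -/

/-- The numerators of the iterated derivatives of `r / sinh r` in the variable `cosh r`:
`(-(1/sinh r) d/dr)^n (r / sinh r) = numF n r / sinh r ^ (2n+1)`. -/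
def numF : ℕ → ℝ → ℝ
  | 0 => fun r => r
  | 1 => fun r => r * Real.cosh r - Real.sinh r
  | (n + 2) => fun r => (2 * (n : ℝ) + 3) * Real.cosh r * numF (n + 1) r -
      ((n : ℝ) + 1) ^ 2 * Real.sinh r ^ 2 * numF n r

lemma numF_succ_succ (n : ℕ) (r : ℝ) :
    numF (n + 2) r = (2 * (n : ℝ) + 3) * Real.cosh r * numF (n + 1) r -
      ((n : ℝ) + 1) ^ 2 * Real.sinh r ^ 2 * numF n r := rfl

/-- The second description of the numerators: each is, up to a positive factor, the primitive
of `sinh` times the previous one. -/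
lemma hasDerivAt_numF_succ (n : ℕ) (r : ℝ) :
    HasDerivAt (numF (n + 1)) (((n : ℝ) + 1) ^ 2 * Real.sinh r * numF n r) r := by
  induction n using Nat.twoStepInduction with
  | zero =>
    have h := ((hasDerivAt_id r).mul (Real.hasDerivAt_cosh r)).sub (Real.hasDerivAt_sinh r)
    refine h.congr_deriv ?_
    simp [numF]
    ring
  | one =>
    have h1 := ((hasDerivAt_id r).mul (Real.hasDerivAt_cosh r)).sub (Real.hasDerivAt_sinh r)
    have h := (((Real.hasDerivAt_cosh r).const_mul 3).mul h1).sub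
      (((Real.hasDerivAt_sinh r).pow 2).mul (hasDerivAt_id r))
    have e : numF (1 + 1) = ((fun r => 3 * Real.cosh r) * (id * Real.cosh - Real.sinh) -
        Real.sinh ^ 2 * id) := by
      ext x
      simp [numF]
    rw [e]
    refine h.congr_deriv ?_
    simp [numF]
    ring
  | more n ih1 ih2 =>
    have h := (((Real.hasDerivAt_cosh r).const_mul (2 * ((n + 1 : ℕ) : ℝ) + 3)).mul ih2).sub
      ((((Real.hasDerivAt_sinh r).pow 2).const_mul ((((n + 1 : ℕ) : ℝ) + 1) ^ 2)).mul ih1)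
    have e : numF (n + 2 + 1) = ((fun r => (2 * ((n + 1 : ℕ) : ℝ) + 3) * Real.cosh r) *
        numF (n + 1 + 1) - (fun r => (((n + 1 : ℕ) : ℝ) + 1) ^ 2 * (Real.sinh ^ 2) r) *
        numF (n + 1)) := by
      ext x
      simp [numF]
    rw [e]
    refine h.congr_deriv ?_
    rw [numF_succ_succ]
    simp
    ring

lemma numF_zero_right (n : ℕ) : numF n 0 = 0 := by
  induction n using Nat.twoStepInduction with
  | zero => simp [numF]
  | one => simp [numF]
  | more n ih1 ih2 => simp [numF, ih2]

lemma numF_nonneg (n : ℕ) : ∀ r : ℝ, 0 ≤ r → 0 ≤ numF n r := by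
  induction n with
  | zero => intro r hr; simpa [numF] using hr
  | succ n ih =>
    intro r hr
    have hm : MonotoneOn (numF (n + 1)) (Set.Ici 0) := by
      refine monotoneOn_of_deriv_nonneg (convex_Ici 0)
        (fun x _ => (hasDerivAt_numF_succ n x).continuousAt.continuousWithinAt)
        (fun x _ => (hasDerivAt_numF_succ n x).differentiableAt.differentiableWithinAt) ?_
      intro x hx
      rw [interior_Ici] at hx
      rw [(hasDerivAt_numF_succ n x).deriv]
      have := ih x (le_of_lt hx)
      have := (Real.sinh_pos_iff.2 hx).le
      positivity
    have := hm (Set.mem_Ici.2 le_rfl) hr hr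
    rwa [numF_zero_right] at this

/-- In terms of `fS` below: `r · deriv (fS n) r ≤ (C - (n+1) r) · fS n r`, so that the `n`-th derivative
decays like `e^{-(n+1) r}` up to a power of `r`. The induction inserts the bound for `n` into
the three-term recursion; for `r < 2c` the left-hand side is nonpositive. -/
lemma numF_growth (n : ℕ) : ∃ C : ℝ, 1 ≤ C ∧ ∀ r : ℝ, 0 < r →
    (((n : ℝ) + 1) * r - C) * Real.sinh r * numF n r ≤ r * numF (n + 1) r := by
  induction n with
  | zero =>
    refine ⟨1, le_rfl, fun r hr => ?_⟩
    have : 0 ≤ r * r * (Real.cosh r - Real.sinh r) := by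
      rw [Real.cosh_sub_sinh]; positivity
    simp [numF]
    nlinarith
  | succ n ih =>
    obtain ⟨c, hc, h⟩ := ih
    refine ⟨2 * c * ((n : ℝ) + 2), by nlinarith [(Nat.cast_nonneg n : (0 : ℝ) ≤ n)],
      fun r hr => ?_⟩
    have hF1 := numF_nonneg (n + 1) r hr.le
    have hF0 := numF_nonneg n r hr.le
    have hF2 := numF_nonneg (n + 2) r hr.le
    have hS : 0 < Real.sinh r := Real.sinh_pos_iff.2 hr
    have hCS : Real.sinh r ≤ Real.cosh r := (Real.sinh_lt_cosh r).le
    have hn : (0 : ℝ) ≤ n := Nat.cast_nonneg n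
    push_cast
    rcases lt_or_ge r (2 * c) with hlt | hge
    · have h1 : ((n : ℝ) + 1 + 1) * r - 2 * c * ((n : ℝ) + 2) ≤ 0 := by nlinarith
      have h2 : (((n : ℝ) + 1 + 1) * r - 2 * c * ((n : ℝ) + 2)) * (Real.sinh r * numF (n + 1) r)
          ≤ 0 := mul_nonpos_of_nonpos_of_nonneg h1 (by positivity)
      have h3 : 0 ≤ r * numF (n + 1 + 1) r := by positivity
      linarith
    · have h0 := h r hr
      set i : ℝ := (n : ℝ) + 1 with hi
      have hi1 : 1 ≤ i := by linarith
      have hd : 0 < i * r - c := by nlinarith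
      -- multiply the recursion by the positive number `i r - c`
      have key : 0 ≤ (i * r - c) *
          (r * numF (n + 2) r - ((i + 1) * r - 2 * c) * Real.sinh r * numF (n + 1) r) := by
        rw [numF_succ_succ, ← hi]
        have e1 : i ^ 2 * r * Real.sinh r * ((i * r - c) * Real.sinh r * numF n r) ≤
            i ^ 2 * r * Real.sinh r * (r * numF (n + 1) r) :=
          mul_le_mul_of_nonneg_left h0 (by positivity)
        have e2 : 0 ≤ (i * r - c) * r * (2 * i + 1) * numF (n + 1) r *
            (Real.cosh r - Real.sinh r) :=
          mul_nonneg (by positivity) (by linarith)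
        have e3 : 0 ≤ (c * (i * r) - 2 * c ^ 2) * (Real.sinh r * numF (n + 1) r) :=
          mul_nonneg (by nlinarith [mul_le_mul_of_nonneg_right hi1 hr.le]) (by positivity)
        have e4 : (2 * (n : ℝ) + 3) = 2 * i + 1 := by rw [hi]; ring
        rw [e4]
        linarith
      have h4 := nonneg_of_mul_nonneg_right key hd
      have h5 : 0 ≤ (2 * c * ((n : ℝ) + 2) - 2 * c) * (Real.sinh r * numF (n + 1) r) :=
        mul_nonneg (by nlinarith) (by positivity)
      have h6 : numF (n + 1 + 1) r = numF (n + 2) r := rfl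
      rw [h6]
      linarith

/-- The iterated derivatives `(-(1/sinh r) d/dr)^n (r / sinh r)` of `r / sinh r`. -/
def fS (n : ℕ) (r : ℝ) : ℝ := numF n r / Real.sinh r ^ (2 * n + 1)

lemma fS_nonneg (n : ℕ) {r : ℝ} (hr : 0 < r) : 0 ≤ fS n r :=
  div_nonneg (numF_nonneg n r hr.le) (pow_nonneg (Real.sinh_pos_iff.2 hr).le _)

lemma hasDerivAt_fS (n : ℕ) {r : ℝ} (hr : 0 < r) :
    HasDerivAt (fS n) (-Real.sinh r * fS (n + 1) r) r := by
  have hS : Real.sinh r ≠ 0 := (Real.sinh_pos_iff.2 hr).ne'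
  cases n with
  | zero =>
    have h := (hasDerivAt_id r).div (Real.hasDerivAt_sinh r) hS
    have e : fS 0 = id / Real.sinh := by ext x; simp [fS, numF]
    rw [e]
    refine h.congr_deriv ?_
    simp [fS, numF]
    field_simp
    ring
  | succ n =>
    have h := (hasDerivAt_numF_succ n r).div ((Real.hasDerivAt_sinh r).pow (2 * (n + 1) + 1))
      (pow_ne_zero _ hS)
    have e : fS (n + 1) = numF (n + 1) / Real.sinh ^ (2 * (n + 1) + 1) := rfl
    rw [e]
    refine h.congr_deriv ?_
    simp only [fS, numF_succ_succ]
    simp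
    field_simp
    ring

lemma fS_growth (n : ℕ) : ∃ C : ℝ, 0 ≤ C ∧ ∀ r : ℝ, 0 < r →
    r * deriv (fS n) r ≤ (C - ((n : ℝ) + 1) * r) * fS n r := by
  obtain ⟨C, hC, h⟩ := numF_growth n
  refine ⟨C, by linarith, fun r hr => ?_⟩
  rw [(hasDerivAt_fS n hr).deriv]
  have hS : 0 < Real.sinh r := Real.sinh_pos_iff.2 hr
  have h0 := h r hr
  have e : r * (-Real.sinh r * fS (n + 1) r) =
      -(r * numF (n + 1) r) / Real.sinh r ^ (2 * n + 2) := by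
    simp only [fS]; field_simp; ring
  have e' : (C - ((n : ℝ) + 1) * r) * fS n r =
      -((((n : ℝ) + 1) * r - C) * Real.sinh r * numF n r) / Real.sinh r ^ (2 * n + 2) := by
    simp only [fS]; field_simp; ring
  rw [e, e']
  gcongr

/-! ### Nonnegative functions decreasing in `cosh r`, with a rate -/

/-- A nonnegative differentiable function on `(0, ∞)` decaying at least like `r ^ C e^{-α r}`,
in the form of a bound on its logarithmic derivative. -/
structure Dec (α : ℝ) (a : ℝ → ℝ) : Prop where
  diff : ∀ r : ℝ, 0 < r → DifferentiableAt ℝ a r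
  nonneg : ∀ r : ℝ, 0 < r → 0 ≤ a r
  decay : ∃ C : ℝ, 0 ≤ C ∧ ∀ r : ℝ, 0 < r → r * deriv a r ≤ (C - α * r) * a r

lemma Dec.mono {α β : ℝ} {a : ℝ → ℝ} (h : Dec α a) (hb : β ≤ α) : Dec β a := by
  obtain ⟨C, hC, hd⟩ := h.decay
  refine ⟨h.diff, h.nonneg, C, hC, fun r hr => (hd r hr).trans ?_⟩
  have := h.nonneg r hr
  gcongr

lemma Dec.add {α : ℝ} {a b : ℝ → ℝ} (ha : Dec α a) (hb : Dec α b) :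
    Dec α (fun r => a r + b r) := by
  obtain ⟨C, hC, hd⟩ := ha.decay
  obtain ⟨C', hC', hd'⟩ := hb.decay
  refine ⟨fun r hr => (ha.diff r hr).add (hb.diff r hr),
    fun r hr => add_nonneg (ha.nonneg r hr) (hb.nonneg r hr), C + C', by positivity,
    fun r hr => ?_⟩
  have hD := ((ha.diff r hr).hasDerivAt.add (hb.diff r hr).hasDerivAt).deriv
  rw [show (fun r => a r + b r) = a + b from rfl, hD]
  have h1 := mul_nonneg hC' (ha.nonneg r hr)
  have h2 := mul_nonneg hC (hb.nonneg r hr)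
  linarith [hd r hr, hd' r hr]

lemma Dec.mul {α β : ℝ} {a b : ℝ → ℝ} (ha : Dec α a) (hb : Dec β b) :
    Dec (α + β) (fun r => a r * b r) := by
  obtain ⟨C, hC, hd⟩ := ha.decay
  obtain ⟨C', hC', hd'⟩ := hb.decay
  refine ⟨fun r hr => (ha.diff r hr).mul (hb.diff r hr),
    fun r hr => mul_nonneg (ha.nonneg r hr) (hb.nonneg r hr), C + C', by positivity,
    fun r hr => ?_⟩
  have hD := ((ha.diff r hr).hasDerivAt.mul (hb.diff r hr).hasDerivAt).deriv
  rw [show (fun r => a r * b r) = a * b from rfl, hD]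
  have h1 := mul_le_mul_of_nonneg_right (hd r hr) (hb.nonneg r hr)
  have h2 := mul_le_mul_of_nonneg_right (hd' r hr) (ha.nonneg r hr)
  linarith

lemma Dec.const {c : ℝ} (hc : 0 ≤ c) : Dec 0 (fun _ => c) :=
  ⟨fun _ _ => differentiableAt_const c, fun _ _ => hc, 0, le_rfl, fun r _ => by simp⟩

lemma Dec.const_mul {α c : ℝ} {a : ℝ → ℝ} (hc : 0 ≤ c) (ha : Dec α a) :
    Dec α (fun r => c * a r) := by
  simpa using (Dec.const hc).mul ha

/-- The zero function decays at every rate. -/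
lemma Dec.zero (α : ℝ) : Dec α (fun _ => 0) :=
  ⟨fun _ _ => differentiableAt_const _, fun _ _ => le_rfl, 0, le_rfl, fun r _ => by simp⟩

lemma dec_fS (n : ℕ) : Dec ((n : ℝ) + 1) (fS n) :=
  ⟨fun _ hr => (hasDerivAt_fS n hr).differentiableAt, fun _ hr => fS_nonneg n hr, fS_growth n⟩

lemma hasDerivAt_fS_half (n : ℕ) {r : ℝ} (hr : 0 < r) :
    HasDerivAt (fun x => fS n (x / 2)) (-Real.sinh (r / 2) * (1 / 2 * fS (n + 1) (r / 2))) r := by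
  have h := (hasDerivAt_fS n (half_pos hr)).comp r ((hasDerivAt_id r).div_const 2)
  refine h.congr_deriv ?_
  ring

lemma dec_fS_half (n : ℕ) : Dec (((n : ℝ) + 1) / 2) (fun r => fS n (r / 2)) := by
  obtain ⟨C, hC, h⟩ := fS_growth n
  refine ⟨fun _ hr => (hasDerivAt_fS_half n hr).differentiableAt,
    fun _ hr => fS_nonneg n (half_pos hr), C, hC, fun r hr => ?_⟩
  have h0 := h (r / 2) (half_pos hr)
  rw [(hasDerivAt_fS n (half_pos hr)).deriv] at h0
  rw [(hasDerivAt_fS_half n hr).deriv]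
  calc _ = r / 2 * (-Real.sinh (r / 2) * fS (n + 1) (r / 2)) := by ring
    _ ≤ _ := h0
    _ = _ := by ring

/-- `1 / cosh (r/2)`. -/
def sechH (r : ℝ) : ℝ := 1 / Real.cosh (r / 2)

lemma sinh_eq_half (r : ℝ) : Real.sinh r = 2 * Real.sinh (r / 2) * Real.cosh (r / 2) := by
  rw [← Real.sinh_two_mul]; congr 1; ring

lemma hasDerivAt_sechH (r : ℝ) :
    HasDerivAt sechH (-Real.sinh r * (1 / 4 * (sechH r * (sechH r * sechH r)))) r := by
  have hC := (Real.cosh_pos (r / 2)).ne'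
  have h := ((Real.hasDerivAt_cosh (r / 2)).comp r ((hasDerivAt_id r).div_const 2)).inv
    (by simpa using hC)
  have e : sechH = (Real.cosh ∘ fun x => id x / 2)⁻¹ := by ext x; simp [sechH]
  rw [e]
  refine h.congr_deriv ?_
  rw [sinh_eq_half r]
  simp
  field_simp
  ring

lemma dec_sechH : Dec (1 / 2) sechH := by
  refine ⟨fun r _ => (hasDerivAt_sechH r).differentiableAt,
    fun r _ => by unfold sechH; positivity, 1, zero_le_one, fun r hr => ?_⟩
  rw [(hasDerivAt_sechH r).deriv, sinh_eq_half r]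
  have hC := Real.cosh_pos (r / 2)
  have h1 : r / 2 * Real.exp (-(r / 2)) ≤ Real.cosh (r / 2) := by
    have h2 : r / 2 ≤ Real.exp (r / 2) := by linarith [Real.add_one_le_exp (r / 2)]
    calc r / 2 * Real.exp (-(r / 2)) ≤ Real.exp (r / 2) * Real.exp (-(r / 2)) := by gcongr
      _ = 1 := by rw [← Real.exp_add]; simp
      _ ≤ _ := Real.one_le_cosh _
  rw [← Real.cosh_sub_sinh] at h1
  have e : r * (-(2 * Real.sinh (r / 2) * Real.cosh (r / 2)) *
      (1 / 4 * (sechH r * (sechH r * sechH r)))) =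
      -(r / 2 * Real.sinh (r / 2)) / Real.cosh (r / 2) ^ 2 := by
    unfold sechH; field_simp; ring
  have e' : (1 - 1 / 2 * r) * sechH r =
      (Real.cosh (r / 2) - r / 2 * Real.cosh (r / 2)) / Real.cosh (r / 2) ^ 2 := by
    unfold sechH; field_simp
  rw [e, e']
  gcongr
  linarith

/-- The functions produced from `r / sinh (r/2)` by `-(1/sinh (r/2)) d/dr`, sums and products. -/
inductive ClsHalf : (ℝ → ℝ) → Prop
  | const {c : ℝ} (hc : 0 ≤ c) : ClsHalf (fun _ => c)
  | half (n : ℕ) : ClsHalf (fun r => fS n (r / 2))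
  | add {a b : ℝ → ℝ} (ha : ClsHalf a) (hb : ClsHalf b) : ClsHalf (fun r => a r + b r)
  | mul {a b : ℝ → ℝ} (ha : ClsHalf a) (hb : ClsHalf b) : ClsHalf (fun r => a r * b r)

/-- A class of nonnegative functions on `(0, ∞)` stable under sums, products and
`-(1/sinh r) d/dr`, containing `ClsHalf`. Its members are completely monotone
functions of `cosh r`. -/
inductive Cls : (ℝ → ℝ) → Prop
  | const {c : ℝ} (hc : 0 ≤ c) : Cls (fun _ => c)
  | full (n : ℕ) : Cls (fS n)
  | half (n : ℕ) : Cls (fun r => fS n (r / 2))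
  | sech : Cls sechH
  | add {a b : ℝ → ℝ} (ha : Cls a) (hb : Cls b) : Cls (fun r => a r + b r)
  | mul {a b : ℝ → ℝ} (ha : Cls a) (hb : Cls b) : Cls (fun r => a r * b r)

lemma ClsHalf.toCls {a : ℝ → ℝ} (h : ClsHalf a) : Cls a := by
  induction h with
  | const hc => exact .const hc
  | half n => exact .half n
  | add _ _ iha ihb => exact .add iha ihb
  | mul _ _ iha ihb => exact .mul iha ihb

lemma ClsHalf.exists_deriv {a : ℝ → ℝ} (h : ClsHalf a) : ∃ b, ClsHalf b ∧
    ∀ r : ℝ, 0 < r → HasDerivAt a (-Real.sinh (r / 2) * b r) r := by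
  induction h with
  | @const c hc => exact ⟨_, .const le_rfl, fun r _ => by simpa using hasDerivAt_const r c⟩
  | half n =>
    exact ⟨_, .mul (.const (by norm_num : (0 : ℝ) ≤ 1 / 2)) (.half (n + 1)),
      fun r hr => hasDerivAt_fS_half n hr⟩
  | add _ _ iha ihb =>
    obtain ⟨a', ha', hda⟩ := iha
    obtain ⟨b', hb', hdb⟩ := ihb
    exact ⟨_, .add ha' hb', fun r hr => ((hda r hr).add (hdb r hr)).congr_deriv (by ring)⟩
  | @mul a b ha hb iha ihb =>
    obtain ⟨a', ha', hda⟩ := iha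
    obtain ⟨b', hb', hdb⟩ := ihb
    exact ⟨_, .add (.mul ha' hb) (.mul ha hb'),
      fun r hr => ((hda r hr).mul (hdb r hr)).congr_deriv (by ring)⟩

lemma Cls.dec {a : ℝ → ℝ} (h : Cls a) : Dec 0 a := by
  induction h with
  | const hc => exact .const hc
  | full n => exact (dec_fS n).mono (by positivity)
  | half n => exact (dec_fS_half n).mono (by positivity)
  | sech => exact dec_sechH.mono (by norm_num)
  | add _ _ iha ihb => exact iha.add ihb
  | mul _ _ iha ihb => simpa using iha.mul ihb

/-- Applying `-(1/sinh r) d/dr` once gains a factor `e^{-r}`. -/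
lemma Cls.exists_deriv {a : ℝ → ℝ} (h : Cls a) : ∃ b, (Cls b ∧ Dec 1 b) ∧
    ∀ r : ℝ, 0 < r → HasDerivAt a (-Real.sinh r * b r) r := by
  induction h with
  | @const c hc =>
    exact ⟨_, ⟨.const le_rfl, .zero 1⟩, fun r _ => by simpa using hasDerivAt_const r c⟩
  | full n =>
    exact ⟨_, ⟨.full (n + 1), (dec_fS (n + 1)).mono (by simp; positivity)⟩,
      fun r hr => hasDerivAt_fS n hr⟩
  | half n =>
    refine ⟨_, ⟨.mul (.const (by norm_num : (0 : ℝ) ≤ 1 / 4)) (.mul .sech (.half (n + 1))),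
      (Dec.const_mul (by norm_num) (dec_sechH.mul (dec_fS_half (n + 1)))).mono ?_⟩,
      fun r hr => (hasDerivAt_fS_half n hr).congr_deriv ?_⟩
    · push_cast
      linarith [(Nat.cast_nonneg n : (0 : ℝ) ≤ n)]
    · have hC := (Real.cosh_pos (r / 2)).ne'
      rw [sinh_eq_half r, sechH]
      field_simp
      ring
  | sech =>
    exact ⟨_, ⟨.mul (.const (by norm_num : (0 : ℝ) ≤ 1 / 4)) (.mul .sech (.mul .sech .sech)),
      (Dec.const_mul (by norm_num) (dec_sechH.mul (dec_sechH.mul dec_sechH))).mono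
        (by norm_num)⟩, fun r _ => hasDerivAt_sechH r⟩
  | add _ _ iha ihb =>
    obtain ⟨a', ⟨ha', hga⟩, hda⟩ := iha
    obtain ⟨b', ⟨hb', hgb⟩, hdb⟩ := ihb
    exact ⟨_, ⟨.add ha' hb', hga.add hgb⟩,
      fun r hr => ((hda r hr).add (hdb r hr)).congr_deriv (by ring)⟩
  | @mul a b ha hb iha ihb =>
    obtain ⟨a', ⟨ha', hga⟩, hda⟩ := iha
    obtain ⟨b', ⟨hb', hgb⟩, hdb⟩ := ihb
    exact ⟨_, ⟨.add (.mul ha' hb) (.mul ha hb'),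
      ((hga.mul hb.dec).mono (by norm_num)).add ((ha.dec.mul hgb).mono (by norm_num))⟩,
      fun r hr => ((hda r hr).mul (hdb r hr)).congr_deriv (by ring)⟩

lemma Cls.antitone {a : ℝ → ℝ} (h : Cls a) : AntitoneOn a (Set.Ioi 0) := by
  obtain ⟨b, ⟨hb, _⟩, hd⟩ := h.exists_deriv
  refine antitoneOn_of_deriv_nonpos (convex_Ioi 0)
    (fun x hx => (hd x hx).continuousAt.continuousWithinAt)
    (fun x hx => ?_) (fun x hx => ?_)
  · rw [interior_Ioi] at hx
    exact (hd x hx).differentiableAt.differentiableWithinAt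
  · rw [interior_Ioi] at hx
    rw [(hd x hx).deriv]
    have h1 := (Real.sinh_pos_iff.2 hx).le
    have h2 := hb.dec.nonneg x hx
    nlinarith [mul_nonneg h1 h2]

/-! ### The iterated operators applied to the Gaussian -/

/-- Finite sums of terms `t^{-j} a(r)` with `a` in the class `P`; the arguments of the resulting
functions are `t` and `r`, in this order. -/
inductive Rep (P : (ℝ → ℝ) → Prop) : (ℝ → ℝ → ℝ) → Prop
  | term (j : ℕ) {a : ℝ → ℝ} (ha : P a) : Rep P (fun t r => a r * t⁻¹ ^ j)
  | add {G H : ℝ → ℝ → ℝ} (hG : Rep P G) (hH : Rep P H) : Rep P (fun t r => G t r + H t r)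

lemma Rep.mono {P P' : (ℝ → ℝ) → Prop} (hP : ∀ a, P a → P' a) {G : ℝ → ℝ → ℝ} (h : Rep P G) :
    Rep P' G := by
  induction h with
  | term j ha => exact .term j (hP _ ha)
  | add _ _ ihG ihH => exact .add ihG ihH

lemma hasDerivAt_gauss (t r : ℝ) : HasDerivAt (gauss t) (-(r / (2 * t)) * gauss t r) r := by
  have h := ((((hasDerivAt_id r).pow 2).neg).div_const (4 * t)).exp
  refine h.congr_deriv ?_
  simp [gauss]
  ring

/-- One application of `-(1/w) d/dr` to a Gaussian times a sum of terms `t^{-j} a(r)`: since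
`-(1/w) d/dr e^{-r²/(4t)} = t⁻¹ φ e^{-r²/(4t)}` with `w φ = r/2`, nonnegativity of the coefficients
persists when the operator and multiplication by `φ` send the class `P` to the class `P'` of
nonnegative functions. -/
lemma Rep.step {P P' : (ℝ → ℝ) → Prop} {w φ : ℝ → ℝ}
    (hder : ∀ a, P a → ∃ b, P' b ∧ ∀ r : ℝ, 0 < r → HasDerivAt a (-w r * b r) r)
    (hφ : ∀ a, P a → P' (fun r => φ r * a r)) (hw : ∀ r : ℝ, 0 < r → w r * φ r = r / 2)
    {G : ℝ → ℝ → ℝ} (h : Rep P G) : ∃ G', Rep P' G' ∧ ∀ t r : ℝ, 0 < r →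
      HasDerivAt (fun x => gauss t x * G t x) (-w r * (gauss t r * G' t r)) r := by
  induction h with
  | @term j a ha =>
    obtain ⟨b, hb, hd⟩ := hder a ha
    refine ⟨_, .add (.term (j + 1) (hφ a ha)) (.term j hb), fun t r hr => ?_⟩
    have h := (hasDerivAt_gauss t r).mul ((hd r hr).mul_const (t⁻¹ ^ j))
    refine h.congr_deriv ?_
    have e : r / (2 * t) = w r * φ r * t⁻¹ := by
      rw [hw r hr, mul_comm 2 t, div_mul_eq_div_div, div_eq_mul_inv r t]; ring
    rw [e]
    ring
  | add _ _ ihG ihH =>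
    obtain ⟨G', hG', hdG⟩ := ihG
    obtain ⟨H', hH', hdH⟩ := ihH
    refine ⟨_, .add hG' hH', fun t r hr => ?_⟩
    have h := (hdG t r hr).add (hdH t r hr)
    refine (h.congr_deriv ?_).congr_of_eventuallyEq ?_
    · ring
    · exact Eventually.of_forall fun x => mul_add _ _ _

lemma sinh_mul_fS_zero {r : ℝ} (hr : 0 < r) : Real.sinh r * fS 0 r = r := by
  have hS : Real.sinh r ≠ 0 := (Real.sinh_pos_iff.2 hr).ne'
  simp [fS, numF]
  field_simp

lemma iterate_D2_gauss (m : ℕ) : ∃ G, Rep ClsHalf G ∧ ∀ t r : ℝ, 0 < r →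
    (D2^[m] (gauss t)) r = gauss t r * G t r := by
  induction m with
  | zero =>
    exact ⟨_, .term 0 (.const zero_le_one), fun t r _ => by simp⟩
  | succ m ih =>
    obtain ⟨G, hG, hE⟩ := ih
    obtain ⟨G', hG', hd⟩ := hG.step (w := fun r => Real.sinh (r / 2))
      (fun a ha => ha.exists_deriv) (fun a ha => .mul (.half 0) ha)
      (fun r hr => sinh_mul_fS_zero (half_pos hr))
    refine ⟨G', hG', fun t r hr => ?_⟩
    rw [Function.iterate_succ_apply']
    have e : D2^[m] (gauss t) =ᶠ[𝓝 r] fun x => gauss t x * G t x :=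
      (eventually_gt_nhds hr).mono fun x hx => hE t x hx
    have hS : Real.sinh (r / 2) ≠ 0 := (Real.sinh_pos_iff.2 (half_pos hr)).ne'
    rw [D2, e.deriv_eq, (hd t r hr).deriv]
    field_simp

lemma iterate_D1_D2_gauss (k m : ℕ) : ∃ G, Rep (fun a => Cls a ∧ Dec 1 a) G ∧
    ∀ t r : ℝ, 0 < r → (D1^[k + 1] (D2^[m] (gauss t))) r = gauss t r * G t r := by
  have step : ∀ (G : ℝ → ℝ → ℝ) (g : ℝ → ℝ → ℝ), Rep Cls G →
      (∀ t r : ℝ, 0 < r → g t r = gauss t r * G t r) →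
      ∃ G', Rep (fun a => Cls a ∧ Dec 1 a) G' ∧
        ∀ t r : ℝ, 0 < r → D1 (g t) r = gauss t r * G' t r := by
    intro G g hG hE
    obtain ⟨G', hG', hd⟩ := hG.step (P' := fun a => Cls a ∧ Dec 1 a) (w := Real.sinh)
      (φ := fun r => 1 / 2 * fS 0 r) (fun a ha => ha.exists_deriv)
      (fun a ha => ⟨.mul (.mul (.const (by norm_num)) (.full 0)) ha,
        (((dec_fS 0).const_mul (by norm_num)).mul ha.dec).mono (by norm_num)⟩)
      (fun r hr => by linarith [sinh_mul_fS_zero hr])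
    refine ⟨G', hG', fun t r hr => ?_⟩
    have e : g t =ᶠ[𝓝 r] fun x => gauss t x * G t x :=
      (eventually_gt_nhds hr).mono fun x hx => hE t x hx
    have hS : Real.sinh r ≠ 0 := (Real.sinh_pos_iff.2 hr).ne'
    rw [D1, e.deriv_eq, (hd t r hr).deriv]
    field_simp
  induction k with
  | zero =>
    obtain ⟨G, hG, hE⟩ := iterate_D2_gauss m
    exact step G (fun t => D2^[m] (gauss t)) (hG.mono fun a ha => ha.toCls) hE
  | succ k ih =>
    obtain ⟨G, hG, hE⟩ := ih
    obtain ⟨G', hG', hE'⟩ := step G (fun t => D1^[k + 1] (D2^[m] (gauss t)))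
      (hG.mono fun a ha => ha.1) hE
    refine ⟨G', hG', fun t r hr => ?_⟩
    rw [Function.iterate_succ_apply']
    exact hE' t r hr

/-! ### The time derivative of a polynomial in `1/t` -/

/-- The prefactor `t^{-1/2} e^{-q² t/4}`. -/
def pre (q t : ℝ) : ℝ := t ^ (-(1 : ℝ) / 2) * Real.exp (-q ^ 2 * t / 4)

lemma pre_nonneg (q : ℝ) {t : ℝ} (ht : 0 < t) : 0 ≤ pre q t := by
  unfold pre; positivity

lemma hasDerivAt_pre (q : ℝ) {t : ℝ} (ht : 0 < t) :
    HasDerivAt (pre q) ((-(1 / 2) / t - q ^ 2 / 4) * pre q t) t := by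
  have h1 := Real.hasDerivAt_rpow_const (x := t) (p := -(1 : ℝ) / 2) (Or.inl ht.ne')
  have h2 := (((hasDerivAt_id t).const_mul (-q ^ 2)).div_const 4).exp
  refine (h1.mul h2).congr_deriv ?_
  rw [Real.rpow_sub ht, Real.rpow_one]
  simp [pre]
  ring

/-- The derivative of one term `t^{-1/2-j} e^{-q²t/4} I(t)`, where `I' = r²/(4t²) I + J` with a
remainder `J` of size at most `I/t`. -/
lemma pre_term_bound (q r : ℝ) {t C J : ℝ} (ht : 0 < t) (j : ℕ) {I : ℝ → ℝ}
    (hI : HasDerivAt I (r ^ 2 / (4 * t ^ 2) * I t + J) t) (hI0 : 0 ≤ I t) (hJ0 : 0 ≤ J)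
    (hJ : J ≤ C / t * I t) :
    ∃ D, HasDerivAt (fun u => pre q u * (u⁻¹ ^ j * I u)) D t ∧
      |D - (r ^ 2 / (4 * t ^ 2) - q ^ 2 / 4) * (pre q t * (t⁻¹ ^ j * I t))| ≤
        (1 / 2 + j + C) / t * (pre q t * (t⁻¹ ^ j * I t)) := by
  have hinv : HasDerivAt (fun u : ℝ => u⁻¹ ^ j) (-(j : ℝ) / t * t⁻¹ ^ j) t := by
    refine ((hasDerivAt_inv ht.ne').pow j).congr_deriv ?_
    cases j with
    | zero => simp
    | succ j => simp; field_simp; ring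
  refine ⟨_, (hasDerivAt_pre q ht).mul (hinv.mul hI), ?_⟩
  have hp := pre_nonneg q ht
  have hk : 0 ≤ pre q t * t⁻¹ ^ j := by positivity
  have e : ∀ x : ℝ, |(-(1 / 2) / t - q ^ 2 / 4) * pre q t * (t⁻¹ ^ j * I t) +
      pre q t * (-(j : ℝ) / t * t⁻¹ ^ j * I t + t⁻¹ ^ j * (x * I t + J)) -
      (x - q ^ 2 / 4) * (pre q t * (t⁻¹ ^ j * I t))| =
      pre q t * t⁻¹ ^ j * |J - (1 / 2 + j) / t * I t| := by
    intro x
    conv_rhs => rw [← abs_of_nonneg hk]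
    rw [← abs_mul]
    congr 1
    ring
  have h1 : 0 ≤ (1 / 2 + (j : ℝ)) / t * I t := by positivity
  have h2 : |J - (1 / 2 + j) / t * I t| ≤ (1 / 2 + j + C) / t * I t := by
    rw [add_div _ C, add_mul]
    have h3 : 0 ≤ C / t * I t := hJ0.trans hJ
    rw [abs_le]
    constructor <;> linarith
  refine (e _).trans_le ?_
  calc _ ≤ pre q t * t⁻¹ ^ j * ((1 / 2 + j + C) / t * I t) :=
        mul_le_mul_of_nonneg_left h2 hk
    _ = _ := by ring

/-- The estimate for a linear functional `Λ r` (evaluation at `r` or an integral over `(r, ∞)`),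
linear on the functions satisfying `A r`, once it is known on Gaussians times a function of the
class `P`. -/
lemma Rep.bound {P : (ℝ → ℝ) → Prop} (q : ℝ) (Λ : ℝ → (ℝ → ℝ) → ℝ) (A : ℝ → (ℝ → ℝ) → Prop)
    (hA : ∀ r f g, A r f → A r g → A r (fun s => f s + g s))
    (hAs : ∀ r c f, A r f → A r (fun s => c * f s))
    (hΛ : ∀ r f g, A r f → A r g → Λ r (fun s => f s + g s) = Λ r f + Λ r g)
    (hΛs : ∀ r c f, Λ r (fun s => c * f s) = c * Λ r f)
    (hterm : ∀ a, P a → ∃ C : ℝ, 0 ≤ C ∧ ∀ r t : ℝ, 0 < r → 0 < t →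
      A r (fun s => gauss t s * a s) ∧ 0 ≤ Λ r (fun s => gauss t s * a s) ∧
      ∃ J, 0 ≤ J ∧ J ≤ C / t * Λ r (fun s => gauss t s * a s) ∧
        HasDerivAt (fun u => Λ r (fun s => gauss u s * a s))
          (r ^ 2 / (4 * t ^ 2) * Λ r (fun s => gauss t s * a s) + J) t)
    {G : ℝ → ℝ → ℝ} (h : Rep P G) :
    ∃ C : ℝ, 0 ≤ C ∧ ∀ r t : ℝ, 0 < r → 0 < t →
      A r (fun s => gauss t s * G t s) ∧ 0 ≤ Λ r (fun s => gauss t s * G t s) ∧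
      ∃ D, HasDerivAt (fun u => pre q u * Λ r (fun s => gauss u s * G u s)) D t ∧
        |D - (r ^ 2 / (4 * t ^ 2) - q ^ 2 / 4) * (pre q t * Λ r (fun s => gauss t s * G t s))| ≤
          C / t * (pre q t * Λ r (fun s => gauss t s * G t s)) := by
  induction h with
  | @term j a ha =>
    obtain ⟨C, hC, hh⟩ := hterm a ha
    refine ⟨1 / 2 + j + C, by positivity, fun r t hr ht => ?_⟩
    obtain ⟨hA1, hL, J, hJ0, hJ, hd⟩ := hh r t hr ht
    have e : ∀ u : ℝ, (fun s => gauss u s * (a s * u⁻¹ ^ j)) =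
        fun s => u⁻¹ ^ j * (gauss u s * a s) := fun u => by ext s; ring
    simp only [e, hΛs]
    exact ⟨hAs _ _ _ hA1, by positivity, pre_term_bound q r ht j hd hL hJ0 hJ⟩
  | @add G H _ _ ihG ihH =>
    obtain ⟨C, hC, hG⟩ := ihG
    obtain ⟨C', hC', hH⟩ := ihH
    refine ⟨C + C', by positivity, fun r t hr ht => ?_⟩
    obtain ⟨hA1, hL, D, hD, hB⟩ := hG r t hr ht
    obtain ⟨hA2, hL', D', hD', hB'⟩ := hH r t hr ht
    have e : ∀ u : ℝ, (fun s => gauss u s * (G u s + H u s)) =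
        fun s => gauss u s * G u s + gauss u s * H u s := fun u => by ext s; ring
    simp only [e]
    rw [hΛ _ _ _ hA1 hA2]
    refine ⟨hA _ _ _ hA1 hA2, add_nonneg hL hL', D + D', ?_, ?_⟩
    · refine (hD.add hD').congr_of_eventuallyEq ?_
      filter_upwards [eventually_gt_nhds ht] with u hu
      rw [hΛ _ _ _ (hG r u hr hu).1 (hH r u hr hu).1]
      exact mul_add _ _ _
    · have h1 := abs_le.1 hB
      have h2 := abs_le.1 hB'
      have hp := pre_nonneg q ht
      have x1 : 0 ≤ C / t * (pre q t * Λ r fun s => gauss t s * H t s) := by positivity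
      have x2 : 0 ≤ C' / t * (pre q t * Λ r fun s => gauss t s * G t s) := by positivity
      rw [add_div, abs_le]
      constructor <;> linarith [h1.1, h1.2, h2.1, h2.2]

lemma hasDerivAt_gauss_time (s : ℝ) {t : ℝ} (ht : t ≠ 0) :
    HasDerivAt (fun u => gauss u s) (s ^ 2 / (4 * t ^ 2) * gauss t s) t := by
  have h := ((hasDerivAt_const t (-s ^ 2)).div ((hasDerivAt_id t).const_mul 4)
    (mul_ne_zero four_ne_zero ht)).exp
  refine h.congr_deriv ?_
  simp [gauss]
  field_simp

/-! ### The Abel-type integral -/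

/-- The weight `sinh s / √(cosh s − cosh r)` of the integral defining `h_t` for odd `ν`. -/
def wt (r s : ℝ) : ℝ := Real.sinh s / Real.sqrt (Real.cosh s - Real.cosh r)

lemma cosh_sub_ge {r s : ℝ} (hr : 0 < r) (hs : r ≤ s) :
    Real.sinh r * (s - r) ≤ Real.cosh s - Real.cosh r := by
  have e : Real.cosh s - Real.cosh r = 2 * Real.sinh ((s + r) / 2) * Real.sinh ((s - r) / 2) := by
    have h1 : s = (s + r) / 2 + (s - r) / 2 := by ring
    have h2 : r = (s + r) / 2 - (s - r) / 2 := by ring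
    conv_lhs => rw [h1]
    conv_lhs => rw [h2]
    rw [show (s + ((s + r) / 2 - (s - r) / 2)) / 2 + (s - ((s + r) / 2 - (s - r) / 2)) / 2 =
      (s + r) / 2 + (s - r) / 2 by ring, Real.cosh_add, Real.cosh_sub]
    ring
  have h1 : Real.sinh r ≤ Real.sinh ((s + r) / 2) := Real.sinh_le_sinh.2 (by linarith)
  have h2 : (s - r) / 2 ≤ Real.sinh ((s - r) / 2) := Real.self_le_sinh_iff.2 (by linarith)
  have h3 := (Real.sinh_pos_iff.2 hr).le
  rw [e]
  have := mul_le_mul h1 h2 (by linarith) (h3.trans h1)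
  linarith

lemma cosh_sub_pos {r s : ℝ} (hr : 0 < r) (hs : r < s) : 0 < Real.cosh s - Real.cosh r :=
  (mul_pos (Real.sinh_pos_iff.2 hr) (sub_pos.2 hs)).trans_le (cosh_sub_ge hr hs.le)

lemma wt_nonneg {r s : ℝ} (hr : 0 < r) (hs : r < s) : 0 ≤ wt r s :=
  div_nonneg (Real.sinh_pos_iff.2 (hr.trans hs)).le (Real.sqrt_nonneg _)

lemma gauss_pos (t s : ℝ) : 0 < gauss t s := Real.exp_pos _

/-- The weight has a singularity of order at most `(s-r)^{-1/2}` at `r` and grows at most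
like `e^s`. -/
lemma wt_le {r s : ℝ} (hr : 0 < r) (hs : r < s) :
    wt r s ≤ Real.exp s / Real.sqrt (Real.sinh r) * (Real.sqrt (s - r))⁻¹ := by
  have hS := Real.sinh_pos_iff.2 hr
  have h1 : Real.sqrt (Real.sinh r) * Real.sqrt (s - r) ≤
      Real.sqrt (Real.cosh s - Real.cosh r) := by
    rw [← Real.sqrt_mul hS.le]
    exact Real.sqrt_le_sqrt (cosh_sub_ge hr hs.le)
  have h2 : Real.sinh s ≤ Real.exp s := by
    have := Real.cosh_add_sinh s
    have := Real.cosh_pos s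
    linarith
  have h3 : 0 < Real.sqrt (Real.sinh r) * Real.sqrt (s - r) :=
    mul_pos (Real.sqrt_pos.2 hS) (Real.sqrt_pos.2 (sub_pos.2 hs))
  calc wt r s ≤ Real.exp s / (Real.sqrt (Real.sinh r) * Real.sqrt (s - r)) := by
        unfold wt; gcongr
    _ = _ := by rw [div_mul_eq_div_div, div_eq_mul_inv _ (Real.sqrt (s - r))]

/-- The dominating function `(s-r)^{-1/2} e^{-(s-r)}`. -/
def domK (r s : ℝ) : ℝ := Real.exp (-(s - r)) * (Real.sqrt (s - r))⁻¹

lemma integrableOn_domK (r : ℝ) : IntegrableOn (domK r) (Set.Ioi r) := by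
  have h := Real.GammaIntegral_convergent (s := 1 / 2) (by norm_num)
  have h2 : IntegrableOn (fun x : ℝ => Real.exp (-x) * (Real.sqrt x)⁻¹) (Set.Ioi 0) := by
    refine h.congr_fun (fun x hx => ?_) measurableSet_Ioi
    simp only
    rw [Real.sqrt_eq_rpow, ← Real.rpow_neg (le_of_lt hx)]
    norm_num
  rw [← integrable_indicator_iff measurableSet_Ioi] at h2 ⊢
  refine (h2.comp_sub_right r).congr (Eventually.of_forall fun x => ?_)
  simp [Set.indicator, domK]

lemma integrand_le {a : ℝ → ℝ} (ha : Cls a) {r s t T : ℝ} (hr : 0 < r) (hs : r < s) (ht : 0 < t)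
    (hT : t ≤ T) :
    (1 + s ^ 2) * (wt r s * (gauss t s * a s)) ≤
      a r * (2 * Real.exp (9 * T)) / Real.sqrt (Real.sinh r) * domK r s := by
  have hs0 := hr.trans hs
  have hT0 := ht.trans_le hT
  have h1 := wt_le hr hs
  have h2 : a s ≤ a r := ha.antitone hr hs0 hs.le
  have h3 : 1 + s ^ 2 ≤ 2 * Real.exp s := by
    linarith [Real.quadratic_le_exp_of_nonneg hs0.le]
  have h4 : gauss t s ≤ Real.exp (9 * T - 3 * s) := by
    refine Real.exp_le_exp.2 ?_
    have e1 : -s ^ 2 / (4 * t) ≤ -s ^ 2 / (4 * T) := by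
      rw [neg_div, neg_div]
      gcongr
    refine e1.trans ?_
    rw [div_le_iff₀ (by positivity)]
    nlinarith [sq_nonneg (s - 6 * T)]
  have ha0 := ha.dec.nonneg r hr
  have ha1 := ha.dec.nonneg s hs0
  have hg := gauss_pos t s
  have hS := Real.sqrt_pos.2 (Real.sinh_pos_iff.2 hr)
  calc (1 + s ^ 2) * (wt r s * (gauss t s * a s))
      ≤ (2 * Real.exp s) * ((Real.exp s / Real.sqrt (Real.sinh r) * (Real.sqrt (s - r))⁻¹) *
        (Real.exp (9 * T - 3 * s) * a r)) := by
        have := wt_nonneg hr hs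
        gcongr
    _ = a r * (2 * (Real.exp s * Real.exp s * Real.exp (9 * T - 3 * s))) /
        Real.sqrt (Real.sinh r) * (Real.sqrt (s - r))⁻¹ := by ring
    _ = a r * (2 * (Real.exp (9 * T) * Real.exp (-s))) /
        Real.sqrt (Real.sinh r) * (Real.sqrt (s - r))⁻¹ := by
        rw [← Real.exp_add, ← Real.exp_add, ← Real.exp_add]
        ring_nf
    _ ≤ a r * (2 * (Real.exp (9 * T) * Real.exp (-(s - r)))) /
        Real.sqrt (Real.sinh r) * (Real.sqrt (s - r))⁻¹ := by
        gcongr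
        linarith
    _ = _ := by unfold domK; ring

lemma continuousOn_wt {r : ℝ} (hr : 0 < r) : ContinuousOn (wt r) (Set.Ioi r) := by
  refine Real.continuous_sinh.continuousOn.div
    (Real.continuous_cosh.sub continuous_const).sqrt.continuousOn fun s hs => ?_
  exact (Real.sqrt_pos.2 (cosh_sub_pos hr hs)).ne'

lemma continuous_gauss (t : ℝ) : Continuous (gauss t) :=
  continuous_iff_continuousAt.2 fun r => (hasDerivAt_gauss t r).continuousAt

lemma continuousOn_integrand {a : ℝ → ℝ} (ha : Cls a) {r : ℝ} (hr : 0 < r) (t : ℝ) :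
    ContinuousOn (fun s => wt r s * (gauss t s * a s)) (Set.Ioi r) :=
  (continuousOn_wt hr).mul ((continuous_gauss t).continuousOn.mul fun s hs =>
    (ha.dec.diff s (hr.trans hs)).continuousAt.continuousWithinAt)

lemma integrand_nonneg {a : ℝ → ℝ} (ha : Cls a) {r s : ℝ} (hr : 0 < r) (hs : r < s) (t : ℝ) :
    0 ≤ wt r s * (gauss t s * a s) :=
  mul_nonneg (wt_nonneg hr hs) (mul_nonneg (gauss_pos t s).le (ha.dec.nonneg s (hr.trans hs)))

lemma integrableOn_integrand {a : ℝ → ℝ} (ha : Cls a) {r t : ℝ} (hr : 0 < r) (ht : 0 < t) :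
    IntegrableOn (fun s => wt r s * (gauss t s * a s)) (Set.Ioi r) := by
  refine Integrable.mono' ((integrableOn_domK r).const_mul
    (a r * (2 * Real.exp (9 * t)) / Real.sqrt (Real.sinh r)))
    ((continuousOn_integrand ha hr t).aestronglyMeasurable measurableSet_Ioi) ?_
  refine (ae_restrict_iff' measurableSet_Ioi).2 (Eventually.of_forall fun s hs => ?_)
  have h0 := integrand_nonneg ha hr hs t
  rw [Real.norm_of_nonneg h0]
  refine le_trans ?_ (integrand_le ha hr hs ht le_rfl)
  nlinarith [mul_nonneg (sq_nonneg s) h0]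

/-- Differentiation under the integral sign. -/
lemma hasDerivAt_integral {a : ℝ → ℝ} (ha : Cls a) {r t : ℝ} (hr : 0 < r) (ht : 0 < t) :
    IntegrableOn (fun s => s ^ 2 / (4 * t ^ 2) * (wt r s * (gauss t s * a s))) (Set.Ioi r) ∧
    HasDerivAt (fun u => ∫ s in Set.Ioi r, wt r s * (gauss u s * a s))
      (∫ s in Set.Ioi r, s ^ 2 / (4 * t ^ 2) * (wt r s * (gauss t s * a s))) t := by
  have hball : ∀ u ∈ Metric.ball t (t / 2), t / 2 < u ∧ u ≤ 2 * t := by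
    intro u hu
    rw [Metric.mem_ball, Real.dist_eq, abs_lt] at hu
    constructor <;> linarith [hu.1, hu.2]
  refine hasDerivAt_integral_of_dominated_loc_of_deriv_le (𝕜 := ℝ)
    (F := fun u s => wt r s * (gauss u s * a s))
    (F' := fun u s => s ^ 2 / (4 * u ^ 2) * (wt r s * (gauss u s * a s)))
    (bound := fun s => 1 / t ^ 2 *
      (a r * (2 * Real.exp (9 * (2 * t))) / Real.sqrt (Real.sinh r) * domK r s))
    (Metric.ball_mem_nhds t (half_pos ht)) ?_ (integrableOn_integrand ha hr ht) ?_ ?_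
    (((integrableOn_domK r).const_mul _).const_mul _) ?_
  · exact Eventually.of_forall fun u =>
      (continuousOn_integrand ha hr u).aestronglyMeasurable measurableSet_Ioi
  · refine ContinuousOn.aestronglyMeasurable (ContinuousOn.mul ?_
      (continuousOn_integrand ha hr t)) measurableSet_Ioi
    fun_prop
  · refine (ae_restrict_iff' measurableSet_Ioi).2 (Eventually.of_forall fun s hs u hu => ?_)
    obtain ⟨hu1, hu2⟩ := hball u hu
    have hu0 : 0 < u := by linarith
    have h0 := integrand_nonneg ha hr hs u
    rw [Real.norm_of_nonneg (mul_nonneg (by positivity) h0)]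
    have h1 := integrand_le ha hr hs hu0 hu2
    have h2 : s ^ 2 / (4 * u ^ 2) ≤ 1 / t ^ 2 * (1 + s ^ 2) := by
      rw [div_mul_eq_mul_div, one_mul]
      have : t ^ 2 ≤ 4 * u ^ 2 := by nlinarith
      gcongr
      linarith
    calc _ ≤ 1 / t ^ 2 * (1 + s ^ 2) * (wt r s * (gauss u s * a s)) :=
          mul_le_mul_of_nonneg_right h2 h0
      _ = 1 / t ^ 2 * ((1 + s ^ 2) * (wt r s * (gauss u s * a s))) := by ring
      _ ≤ _ := mul_le_mul_of_nonneg_left h1 (by positivity)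
  · refine (ae_restrict_iff' measurableSet_Ioi).2 (Eventually.of_forall fun s hs u hu => ?_)
    have hu0 : u ≠ 0 := by linarith [(hball u hu).1]
    refine (((hasDerivAt_gauss_time s hu0).mul_const (a s)).const_mul (wt r s)).congr_deriv ?_
    ring

lemma hasDerivAt_wt {r s : ℝ} (hr : 0 < r) (hs : r < s) :
    HasDerivAt (wt r) (Real.cosh s / Real.sqrt (Real.cosh s - Real.cosh r) -
      Real.sinh s ^ 2 / (2 * (Real.cosh s - Real.cosh r) *
        Real.sqrt (Real.cosh s - Real.cosh r))) s := by
  have hp := cosh_sub_pos hr hs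
  have hq := Real.sqrt_pos.2 hp
  have h := (Real.hasDerivAt_sinh s).div (((Real.hasDerivAt_cosh s).sub_const
    (Real.cosh r)).sqrt hp.ne') hq.ne'
  refine h.congr_deriv ?_
  have e : Real.sqrt (Real.cosh s - Real.cosh r) ^ 2 = Real.cosh s - Real.cosh r :=
    Real.sq_sqrt hp.le
  rw [e]
  field_simp
  rw [e]

/-- The function whose derivative gives the integration by parts. -/
def parts (a : ℝ → ℝ) (r t s : ℝ) : ℝ := (s ^ 2 - r ^ 2) / s * (wt r s * (gauss t s * a s))

/-- The derivative of `parts` is bounded by the two terms balanced in the integration by parts.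
The point is that the logarithmic derivative of `wt r · a` is at most `(C + 1)/s`: the growth
`coth s` of the weight is compensated by the decay of `a`. -/
lemma parts_deriv {a : ℝ → ℝ} (ha : Cls a) {C : ℝ} (hC : 0 ≤ C)
    (hd : ∀ r : ℝ, 0 < r → r * deriv a r ≤ (C - 1 * r) * a r) {r s t : ℝ} (hr : 0 < r)
    (hs : r < s) (ht : 0 < t) : ∃ d, HasDerivAt (parts a r t) d s ∧
      d ≤ (C + 3) * (wt r s * (gauss t s * a s)) -
        (s ^ 2 - r ^ 2) / (2 * t) * (wt r s * (gauss t s * a s)) := by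
  have hs0 := hr.trans hs
  have hp := cosh_sub_pos hr hs
  have hq := Real.sqrt_pos.2 hp
  have h1 := ((((hasDerivAt_id s).pow 2).sub_const (r ^ 2)).div (hasDerivAt_id s) hs0.ne').mul
    ((hasDerivAt_wt hr hs).mul ((hasDerivAt_gauss t s).mul (ha.dec.diff s hs0).hasDerivAt))
  refine ⟨_, h1, ?_⟩
  have hS := Real.sinh_pos_iff.2 hs0
  have ha0 := ha.dec.nonneg s hs0
  have hg := gauss_pos t s
  have hd0 := hd s hs0
  -- `s coth s ≤ s + 1`
  have hcoth : s * Real.cosh s ≤ (s + 1) * Real.sinh s := by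
    have e1 : Real.cosh s - Real.sinh s = Real.exp (-s) := Real.cosh_sub_sinh s
    have e2 : s * Real.exp (-s) ≤ 1 := by
      calc s * Real.exp (-s) ≤ Real.exp s * Real.exp (-s) := by
            gcongr; linarith [Real.add_one_le_exp s]
        _ = 1 := by rw [← Real.exp_add]; simp
    have e3 : s ≤ Real.sinh s := Real.self_le_sinh_iff.2 hs0.le
    have e4 : s * Real.exp (-s) ≤ Real.sinh s := by
      have : Real.exp (-s) ≤ 1 := Real.exp_le_one_iff.2 (by linarith)
      nlinarith
    nlinarith
  set q := Real.sqrt (Real.cosh s - Real.cosh r) with hqdef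
  have hw : wt r s = Real.sinh s / q := rfl
  have hwd : s * (Real.cosh s / q - Real.sinh s ^ 2 / (2 * (Real.cosh s - Real.cosh r) * q)) ≤
      (s + 1) * wt r s := by
    have e1 : 0 ≤ s * (Real.sinh s ^ 2 / (2 * (Real.cosh s - Real.cosh r) * q)) := by positivity
    have e2 : s * (Real.cosh s / q) ≤ (s + 1) * wt r s := by
      rw [hw, ← mul_div_assoc, ← mul_div_assoc]
      gcongr
    linarith
  set w' := Real.cosh s / q - Real.sinh s ^ 2 / (2 * (Real.cosh s - Real.cosh r) * q)
  have hw0 : 0 ≤ wt r s := wt_nonneg hr hs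
  have hm : s * (w' * a s + wt r s * deriv a s) ≤ (C + 1) * (wt r s * a s) := by
    have e1 := mul_le_mul_of_nonneg_right hwd ha0
    have e2 := mul_le_mul_of_nonneg_left hd0 hw0
    linarith
  have hrs : r ^ 2 / s ^ 2 ≤ 1 := by
    rw [div_le_one (by positivity)]
    nlinarith
  have hrs0 : 0 ≤ r ^ 2 / s ^ 2 := by positivity
  have hX : 0 ≤ wt r s * a s := mul_nonneg hw0 ha0
  have hm2 : (1 - r ^ 2 / s ^ 2) * (s * (w' * a s + wt r s * deriv a s)) ≤
      (C + 1) * (wt r s * a s) :=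
    (mul_le_mul_of_nonneg_left hm (by linarith)).trans (by
      have := mul_nonneg hrs0 (mul_nonneg (by linarith : 0 ≤ C + 1) hX)
      linarith)
  have hm3 : (1 + r ^ 2 / s ^ 2) * (wt r s * a s) ≤ 2 * (wt r s * a s) :=
    mul_le_mul_of_nonneg_right (by linarith) hX
  have hfin := mul_le_mul_of_nonneg_right (add_le_add hm2 hm3) hg.le
  have hs1 := hs0.ne'
  have e : ∀ x y : ℝ, ((2 * s ^ (2 - 1) * 1) * s - (s ^ 2 - r ^ 2) * 1) / s ^ 2 *
      (wt r s * (gauss t s * a s)) + (s ^ 2 - r ^ 2) / s * (x * (gauss t s * a s) +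
      wt r s * (-(s / (2 * t)) * gauss t s * a s + gauss t s * y)) =
      ((1 - r ^ 2 / s ^ 2) * (s * (x * a s + wt r s * y)) +
        (1 + r ^ 2 / s ^ 2) * (wt r s * a s)) * gauss t s -
      (s ^ 2 - r ^ 2) / (2 * t) * (wt r s * (gauss t s * a s)) := by
    intro x y
    field_simp
    ring
  refine (le_of_eq ?_).trans ((sub_le_sub_right hfin
    ((s ^ 2 - r ^ 2) / (2 * t) * (wt r s * (gauss t s * a s)))).trans (le_of_eq (by ring)))
  rw [← e]
  simp

lemma parts_nonneg {a : ℝ → ℝ} (ha : Cls a) {r s : ℝ} (hr : 0 < r) (hs : r < s) (t : ℝ) :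
    0 ≤ parts a r t s := by
  have h1 : 0 ≤ s ^ 2 - r ^ 2 := by nlinarith
  exact mul_nonneg (div_nonneg h1 (hr.trans hs).le) (integrand_nonneg ha hr hs t)

/-- The factor `s² - r²` beats the singularity of the weight at `s = r`; the value at `r` is `0`
because of this factor. -/
lemma parts_continuousWithinAt {a : ℝ → ℝ} (ha : Cls a) {r t : ℝ} (hr : 0 < r) (ht : 0 < t) :
    ContinuousWithinAt (parts a r t) (Set.Ici r) r := by
  have h0 : parts a r t r = 0 := by simp [parts]
  set M : ℝ → ℝ := fun s => (s + r) / r *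
    (Real.exp s / Real.sqrt (Real.sinh r) * Real.sqrt (s - r)) * a r with hM
  have hMc : Continuous M := by
    have := Real.continuous_exp
    simp only [hM]
    fun_prop
  have hM0 : M r = 0 := by simp [hM]
  unfold ContinuousWithinAt
  rw [h0]
  have hlim : Tendsto M (𝓝[Set.Ici r] r) (𝓝 0) := by
    have := (hMc.tendsto r).mono_left (nhdsWithin_le_nhds (s := Set.Ici r))
    rwa [hM0] at this
  refine tendsto_of_tendsto_of_tendsto_of_le_of_le' tendsto_const_nhds hlim ?_ ?_
  · filter_upwards [self_mem_nhdsWithin] with s hs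
    rcases eq_or_lt_of_le (Set.mem_Ici.1 hs) with h | h
    · rw [← h, h0]
    · exact parts_nonneg ha hr h t
  · filter_upwards [self_mem_nhdsWithin] with s hs
    rcases eq_or_lt_of_le (Set.mem_Ici.1 hs) with h | h
    · rw [← h, h0, hM0]
    · have hs0 := hr.trans h
      have ha0 := ha.dec.nonneg r hr
      have h2 : a s ≤ a r := ha.antitone hr hs0 h.le
      have ha1 := ha.dec.nonneg s hs0
      have hg : gauss t s ≤ 1 := by
        refine Real.exp_le_one_iff.2 ?_
        rw [neg_div]
        have : 0 ≤ s ^ 2 / (4 * t) := by positivity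
        linarith
      have hsr : 0 < s - r := sub_pos.2 h
      have hq := Real.sqrt_pos.2 hsr
      have e : (s - r) * (Real.sqrt (s - r))⁻¹ = Real.sqrt (s - r) := by
        rw [← div_eq_mul_inv, Real.div_sqrt]
      have hS := Real.sqrt_pos.2 (Real.sinh_pos_iff.2 hr)
      have h3 : (s ^ 2 - r ^ 2) / s ≤ (s + r) / r * (s - r) := by
        rw [div_mul_eq_mul_div, show s ^ 2 - r ^ 2 = (s + r) * (s - r) by ring]
        gcongr
      have hw := wt_le hr h
      have hw0 := wt_nonneg hr h
      have hg0 := (gauss_pos t s).le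
      calc parts a r t s ≤ (s + r) / r * (s - r) *
            ((Real.exp s / Real.sqrt (Real.sinh r) * (Real.sqrt (s - r))⁻¹) * (1 * a r)) := by
            unfold parts
            gcongr
        _ = (s + r) / r * (Real.exp s / Real.sqrt (Real.sinh r) *
            ((s - r) * (Real.sqrt (s - r))⁻¹)) * a r := by ring
        _ = M s := by rw [e]

/-- Integration by parts: on average `(s² - r²)/(4t²)` is `O(1/t)`. -/
lemma integral_sq_sub_le {a : ℝ → ℝ} (ha : Cls a) {C : ℝ} (hC : 0 ≤ C)
    (hd : ∀ r : ℝ, 0 < r → r * deriv a r ≤ (C - 1 * r) * a r) {r t : ℝ} (hr : 0 < r)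
    (ht : 0 < t) :
    ∫ s in Set.Ioi r, (s ^ 2 / (4 * t ^ 2) * (wt r s * (gauss t s * a s)) -
        r ^ 2 / (4 * t ^ 2) * (wt r s * (gauss t s * a s))) ≤
      (C + 3) / 2 / t * ∫ s in Set.Ioi r, wt r s * (gauss t s * a s) := by
  have i1 := integrableOn_integrand ha hr ht
  have i2 := (hasDerivAt_integral ha hr ht).1
  set f : ℝ → ℝ := fun s => wt r s * (gauss t s * a s) with hf
  set g : ℝ → ℝ := fun s => s ^ 2 / (4 * t ^ 2) * f s - r ^ 2 / (4 * t ^ 2) * f s with hg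
  have ig : IntegrableOn g (Set.Ioi r) := i2.sub (i1.const_mul _)
  set φ : ℝ → ℝ := fun s => (C + 3) * f s - 2 * t * g s with hφ
  have iφ : IntegrableOn φ (Set.Ioi r) := (i1.const_mul _).sub (ig.const_mul _)
  have hpos : ∀ b : ℝ, r < b → 0 ≤ ∫ s in r..b, φ s := by
    intro b hb
    choose! d hd1 hd2 using fun s (hs : r < s) => parts_deriv ha hC hd hr hs ht
    have h := intervalIntegral.sub_le_integral_of_hasDeriv_right_of_le (g := parts a r t)
      (g' := d) (φ := φ) hb.le ?_ (fun s hs => (hd1 s hs.1).hasDerivWithinAt) ?_ ?_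
    · have e : parts a r t r = 0 := by simp [parts]
      rw [e, sub_zero] at h
      exact (parts_nonneg ha hr hb t).trans h
    · intro s hs
      rcases eq_or_lt_of_le hs.1 with h | h
      · rw [← h]
        exact (parts_continuousWithinAt ha hr ht).mono Set.Icc_subset_Ici_self
      · exact (hd1 s h).continuousAt.continuousWithinAt
    · rw [integrableOn_Icc_iff_integrableOn_Ioc]
      exact iφ.mono_set Set.Ioc_subset_Ioi_self
    · intro s hs
      refine (hd2 s hs.1).trans (le_of_eq ?_)
      simp only [hφ, hg, hf]
      field_simp
      ring
  have hlim := intervalIntegral_tendsto_integral_Ioi r iφ tendsto_id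
  have h0 : 0 ≤ ∫ s in Set.Ioi r, φ s :=
    ge_of_tendsto hlim ((eventually_gt_atTop r).mono fun b hb => hpos b hb)
  have e : ∫ s in Set.Ioi r, φ s =
      (C + 3) * (∫ s in Set.Ioi r, f s) - 2 * t * ∫ s in Set.Ioi r, g s := by
    rw [← integral_const_mul, ← integral_const_mul]
    exact integral_sub (i1.const_mul _) (ig.const_mul _)
  rw [e] at h0
  have : (∫ s in Set.Ioi r, g s) ≤ ((C + 3) * ∫ s in Set.Ioi r, f s) / (2 * t) := by
    rw [le_div_iff₀ (by positivity)]
    linarith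
  refine this.trans (le_of_eq ?_)
  field_simp

/-! ### Conclusion -/

/-- The bound for a function equal, for `t > 0`, to a nonnegative multiple of
`t^{-1/2} e^{-q²t/4} X(t)`. -/
lemma bound_of_eq {q k C D r t : ℝ} (hk : 0 ≤ k) (hC : 0 ≤ C) (ht : 0 < t) {h X : ℝ → ℝ}
    (he : ∀ u : ℝ, 0 < u → h u = k * (pre q u * X u)) (hX : 0 ≤ X t)
    (hD : HasDerivAt (fun u => pre q u * X u) D t)
    (hB : |D - (r ^ 2 / (4 * t ^ 2) - q ^ 2 / 4) * (pre q t * X t)| ≤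
      C / t * (pre q t * X t)) :
    |deriv h t| ≤ (C + 1) * (|r ^ 2 / (4 * t ^ 2) - q ^ 2 / 4| + 1 / t) * h t := by
  have e : h =ᶠ[𝓝 t] fun u => k * (pre q u * X u) :=
    (eventually_gt_nhds ht).mono fun u hu => he u hu
  rw [e.deriv_eq, (hD.const_mul k).deriv, he t ht, abs_mul, abs_of_nonneg hk]
  have hY : 0 ≤ pre q t * X t := mul_nonneg (pre_nonneg q ht) hX
  set Y := pre q t * X t
  set z := r ^ 2 / (4 * t ^ 2) - q ^ 2 / 4
  have h1 : |D| ≤ |z| * Y + C / t * Y := by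
    have h2 : |D| ≤ |D - z * Y| + |z * Y| := by
      have := abs_add_le (D - z * Y) (z * Y)
      rwa [sub_add_cancel] at this
    rw [abs_mul, abs_of_nonneg hY] at h2
    linarith
  have h3 : 0 ≤ (C * |z| + 1 / t) * Y := by positivity
  calc k * |D| ≤ k * ((C + 1) * (|z| + 1 / t) * Y) := by
        refine mul_le_mul_of_nonneg_left ?_ hk
        have : C / t = C * (1 / t) := by ring
        rw [this] at h1
        linarith
    _ = _ := by ring

lemma cc_nonneg (μ ν k : ℕ) : 0 ≤ cc μ ν k := by unfold cc; positivity

theorem first_time_derivative_bound (μ ν : ℕ) (hμ : Even μ) (hν : 1 ≤ ν) :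
    ∃ C : ℝ, 0 < C ∧ ∀ r t : ℝ, 0 < r → 0 < t →
      |deriv (fun u => heat μ ν u r) t| ≤
        C * (|r ^ 2 / (4 * t ^ 2) - (Qc μ ν) ^ 2 / 4| + 1 / t) * heat μ ν t r := by
  by_cases hev : Even ν
  · obtain ⟨k, hk⟩ : ∃ k, ν / 2 = k + 1 := by
      obtain ⟨l, hl⟩ := hev
      exact ⟨ν / 2 - 1, by omega⟩
    obtain ⟨G, hG, hE⟩ := iterate_D1_D2_gauss k (μ / 2)
    obtain ⟨C, hC, hB⟩ := hG.bound (Qc μ ν) (fun r f => f r) (fun _ _ => True)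
      (fun _ _ _ _ _ => trivial) (fun _ _ _ _ => trivial) (fun _ _ _ _ _ => rfl)
      (fun _ _ _ => rfl) (fun a ha => by
        refine ⟨0, le_rfl, fun r t hr ht => ⟨trivial,
          mul_nonneg (gauss_pos t r).le (ha.1.dec.nonneg r hr), 0, le_rfl, by simp, ?_⟩⟩
        exact ((hasDerivAt_gauss_time r ht.ne').mul_const (a r)).congr_deriv (by ring))
    refine ⟨C + 1, by positivity, fun r t hr ht => ?_⟩
    obtain ⟨-, hX, D, hD, hb⟩ := hB r t hr ht
    refine bound_of_eq (cc_nonneg μ ν 0) hC ht (h := fun u => heat μ ν u r) ?_ hX hD hb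
    intro u hu
    simp only [heat, if_pos hev, hk, hE u r hr, pre]
    ring
  · obtain ⟨k, hk⟩ : ∃ k, (ν + 1) / 2 = k + 1 := ⟨(ν + 1) / 2 - 1, by omega⟩
    obtain ⟨G, hG, hE⟩ := iterate_D1_D2_gauss k (μ / 2)
    obtain ⟨C, hC, hB⟩ := hG.bound (Qc μ ν) (fun r f => ∫ s in Set.Ioi r, wt r s * f s)
      (fun r f => IntegrableOn (fun s => wt r s * f s) (Set.Ioi r))
      (fun r f g hf hg => by
        simp only [mul_add]
        exact hf.add hg)
      (fun r c f hf => by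
        simp only [mul_left_comm _ c]
        exact hf.const_mul c)
      (fun r f g hf hg => by
        simp only [mul_add]
        exact integral_add hf hg)
      (fun r c f => by
        simp only [mul_left_comm _ c]
        exact integral_const_mul c _)
      (fun a ha => by
        obtain ⟨ha, hdec⟩ := ha
        obtain ⟨C, hC, hd⟩ := hdec.decay
        refine ⟨(C + 3) / 2, by positivity, fun r t hr ht => ?_⟩
        have i1 := integrableOn_integrand ha hr ht
        obtain ⟨i2, hD⟩ := hasDerivAt_integral ha hr ht
        refine ⟨i1, setIntegral_nonneg measurableSet_Ioi
          fun s hs => integrand_nonneg ha hr hs t, _, ?_,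
          integral_sq_sub_le ha hC hd hr ht, ?_⟩
        · refine setIntegral_nonneg measurableSet_Ioi fun s hs => ?_
          have h0 := integrand_nonneg ha hr hs t
          rw [← sub_mul, ← sub_div]
          have hs' : r < s := hs
          have : 0 ≤ s ^ 2 - r ^ 2 := by nlinarith
          positivity
        · refine hD.congr_deriv ?_
          rw [integral_sub i2 (i1.const_mul _), integral_const_mul]
          ring)
    refine ⟨C + 1, by positivity, fun r t hr ht => ?_⟩
    obtain ⟨-, hX, D, hD, hb⟩ := hB r t hr ht
    refine bound_of_eq (k := cc μ ν 0 * Real.pi ^ (-(1 : ℝ) / 2))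
      (mul_nonneg (cc_nonneg μ ν 0) (by positivity)) hC ht
      (h := fun u => heat μ ν u r) ?_ hX hD hb
    intro u hu
    have e : ∫ s in Set.Ioi r, (Real.sinh s / Real.sqrt (Real.cosh s - Real.cosh r)) *
        (D1^[(ν + 1) / 2] (D2^[μ / 2] (gauss u))) s =
        ∫ s in Set.Ioi r, wt r s * (gauss u s * G u s) := by
      refine setIntegral_congr_fun measurableSet_Ioi fun s hs => ?_
      simp only [hk, wt]
      rw [hE u s (hr.trans hs)]
    simp only [heat, if_neg hev, e, pre]
    ring

end DR
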